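/- arXiv:2103.15539 — 2 statements merged into one kernel-verified Lean document; each statement's English description precedes it below -/
import Mathlib

section
/- The 45-letter relation word cabbcbbcbacabacbcbbcabbcabcbbcbbacbacbcbbcabb of Thompson's group V acts as the identity on C: applying, in order (left to right), the maps c, a, b, b, c, b, b, c, b, a, c, a, b, a, c, b, c, b, b, c, a, b, b, c, a, b, c, b, b, c, b, b, a, c, b, a, c, b, c, b, b, c, a, b, b to any infinite binary sequence x returns x. -/
/-- Cantor space of infinite binary sequences, `false` representing 0 and `true` representing 1. -/
abbrev Cantor : Type := ℕ → Bool

/-- Generator `a` of Thompson's V: 00x ↦ 01x, 01x ↦ 00x, 1x ↦ 1x. -/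
def genA (x : Cantor) : Cantor :=
  if x 0 = false then (fun n => if n = 1 then !x 1 else x n) else x

/-- Generator `b` of Thompson's V: 01x ↦ 10x, 10x ↦ 11x, 11x ↦ 01x, 00x ↦ 00x. -/
def genB (x : Cantor) : Cantor := fun n =>
  if n = 0 then
    match x 0, x 1 with
    | false, false => false
    | false, true  => true
    | true,  false => true
    | true,  true  => false
  else if n = 1 then
    match x 0, x 1 with
    | false, false => false
    | false, true  => false
    | true,  false => true
    | true,  true  => true
  else x n

/-- Generator `c` of Thompson's V: 00x ↦ 1x, 1x ↦ 00x, 01x ↦ 01x. -/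
def genC (x : Cantor) : Cantor :=
  if x 0 = true then (fun n => if n ≤ 1 then false else x (n - 1))
  else if x 1 = false then (fun n => if n = 0 then true else x (n + 1))
  else x

/-- Apply a word of maps left to right (leftmost letter first). -/
def applyWord (l : List (Cantor → Cantor)) (x : Cantor) : Cantor :=
  l.foldl (fun y f => f y) x

/-!
Write `(u v w)` for the map cycling the prefixes `u ↦ v ↦ w ↦ u`, and compose left to right. The
word factors as `X · a · Y`, where `X` and `Y` are conjugates of `b² = (01 11 10)`, hence again
three-cycles of prefixes: `X = (000 011 010)` and `Y = (011 001 000)`. As `a` swaps `00` and `01`,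
the product `X · a · Y` is the product `(000 011 010) · (000 010)(001 011) · (011 001 000) = 1` of
permutations of the four prefixes `000`, `001`, `010`, `011`.
-/

local notation "𝟎" => false
local notation "𝟏" => true

/-- Concatenation `ux` of a finite word `u` and an infinite sequence `x`. The image of `prepend u`
is the cone of sequences starting with `u`. -/
def prepend : List Bool → Cantor → Cantor
  | [], x => x
  | b :: u, x => fun n => n.casesOn b (prepend u x)

theorem exists_eq_prepend (n : ℕ) (x : Cantor) :
    ∃ u y, u.length = n ∧ x = prepend u y := by
  induction n generalizing x with
  | zero => exact ⟨[], x, rfl, rfl⟩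
  | succ n ih =>
    obtain ⟨u, y, hu, htail⟩ := ih (fun k => x (k + 1))
    refine ⟨x 0 :: u, y, by simp [hu], funext fun k => ?_⟩
    cases k with
    | zero => rfl
    | succ k => exact congrFun htail k

theorem isPrefix_or_isPrefix_of_prepend_eq {u v : List Bool} {x y : Cantor}
    (h : prepend u x = prepend v y) : u <+: v ∨ v <+: u := by
  induction u generalizing v with
  | nil => exact Or.inl List.nil_prefix
  | cons b u ih =>
    cases v with
    | nil => exact Or.inr List.nil_prefix
    | cons c v =>
      have hhead : b = c := congrFun h 0
      have htail : prepend u x = prepend v y := funext fun n => congrFun h (n + 1)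
      simpa [List.cons_prefix_cons, hhead] using ih htail

theorem prepend_notMem_range_prepend {u v : List Bool} (h : IncompRel (· <+: ·) u v)
    (x : Cantor) : prepend u x ∉ Set.range (prepend v) := by
  rintro ⟨y, hy⟩
  exact (isPrefix_or_isPrefix_of_prepend_eq hy).elim h.2 h.1

section Generators

variable (b : Bool) (u : List Bool) (x : Cantor)

@[simp]
theorem genA_prepend_zero : genA (prepend (𝟎 :: b :: u) x) = prepend (𝟎 :: (!b) :: u) x := by
  funext n
  rcases n with _ | _ | n <;> simp [genA, prepend]

@[simp]
theorem genA_prepend_one : genA (prepend (𝟏 :: u) x) = prepend (𝟏 :: u) x := by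
  simp [genA, prepend]

@[simp]
theorem genB_prepend_zero_zero :
    genB (prepend (𝟎 :: 𝟎 :: u) x) = prepend (𝟎 :: 𝟎 :: u) x := by
  funext n
  rcases n with _ | _ | n <;> simp [genB, prepend]

@[simp]
theorem genB_prepend_zero_one :
    genB (prepend (𝟎 :: 𝟏 :: u) x) = prepend (𝟏 :: 𝟎 :: u) x := by
  funext n
  rcases n with _ | _ | n <;> simp [genB, prepend]

@[simp]
theorem genB_prepend_one_zero :
    genB (prepend (𝟏 :: 𝟎 :: u) x) = prepend (𝟏 :: 𝟏 :: u) x := by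
  funext n
  rcases n with _ | _ | n <;> simp [genB, prepend]

@[simp]
theorem genB_prepend_one_one :
    genB (prepend (𝟏 :: 𝟏 :: u) x) = prepend (𝟎 :: 𝟏 :: u) x := by
  funext n
  rcases n with _ | _ | n <;> simp [genB, prepend]

@[simp]
theorem genC_prepend_zero_zero :
    genC (prepend (𝟎 :: 𝟎 :: u) x) = prepend (𝟏 :: u) x := by
  funext n
  rcases n with _ | n <;> simp [genC, prepend]

@[simp]
theorem genC_prepend_zero_one :
    genC (prepend (𝟎 :: 𝟏 :: u) x) = prepend (𝟎 :: 𝟏 :: u) x := by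
  simp [genC, prepend]

@[simp]
theorem genC_prepend_one : genC (prepend (𝟏 :: u) x) = prepend (𝟎 :: 𝟎 :: u) x := by
  funext n
  rcases n with _ | _ | n <;> simp [genC, prepend]

@[simp]
theorem genA_genA : genA (genA x) = x := by
  obtain ⟨u, y, hu, rfl⟩ := exists_eq_prepend 2 x
  obtain ⟨b₀, b₁, rfl⟩ := List.length_eq_two.1 hu
  cases b₀ <;> simp

@[simp]
theorem genB_genB_genB : genB (genB (genB x)) = x := by
  obtain ⟨u, y, hu, rfl⟩ := exists_eq_prepend 2 x
  obtain ⟨b₀, b₁, rfl⟩ := List.length_eq_two.1 hu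
  cases b₀ <;> cases b₁ <;> simp

@[simp]
theorem genC_genC : genC (genC x) = x := by
  obtain ⟨u, y, hu, rfl⟩ := exists_eq_prepend 2 x
  obtain ⟨b₀, b₁, rfl⟩ := List.length_eq_two.1 hu
  cases b₀ <;> cases b₁ <;> simp

end Generators

theorem applyWord_append (l m : List (Cantor → Cantor)) :
    applyWord (l ++ m) = applyWord m ∘ applyWord l :=
  funext fun _ => List.foldl_append

/-- The map `f` is the three-cycle `(u v w)`: it carries the images of `u`, `v`, `w` cyclically onto
each other, respecting the given parametrizations, and fixes every other point. -/
structure IsThreeCycle {α β : Type*} (f : α → α) (u v w : β → α) : Prop where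
  map_fst : ∀ x, f (u x) = v x
  map_snd : ∀ x, f (v x) = w x
  map_thd : ∀ x, f (w x) = u x
  map_of_notMem : ∀ y, y ∉ Set.range u → y ∉ Set.range v → y ∉ Set.range w → f y = y

theorem IsThreeCycle.conj {α β : Type*} {f g g' : α → α} {u v w u' v' w' : β → α}
    (hf : IsThreeCycle f u v w) (hl : Function.LeftInverse g' g)
    (hr : Function.RightInverse g' g) (hu : ∀ x, g (u x) = u' x) (hv : ∀ x, g (v x) = v' x)
    (hw : ∀ x, g (w x) = w' x) : IsThreeCycle (g ∘ f ∘ g') u' v' w' := by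
  have notMem_of_notMem {s s' : β → α} (hs : ∀ x, g (s x) = s' x) {y : α}
      (hy : y ∉ Set.range s') : g' y ∉ Set.range s := by
    rintro ⟨x, hx⟩
    exact hy ⟨x, by rw [← hs, hx, hr]⟩
  constructor
  · intro x
    simp [← hu, hl _, hf.map_fst, hv]
  · intro x
    simp [← hv, hl _, hf.map_snd, hw]
  · intro x
    simp [← hw, hl _, hf.map_thd, hu]
  · intro y hyu hyv hyw
    have hfix : f (g' y) = g' y := hf.map_of_notMem _ (notMem_of_notMem hu hyu)
      (notMem_of_notMem hv hyv) (notMem_of_notMem hw hyw)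
    simp [hfix, hr y]

theorem IsThreeCycle.map_prepend_of_incompRel {f : Cantor → Cantor} {u v w t : List Bool}
    (hf : IsThreeCycle f (prepend u) (prepend v) (prepend w)) (hu : IncompRel (· <+: ·) t u)
    (hv : IncompRel (· <+: ·) t v) (hw : IncompRel (· <+: ·) t w) (x : Cantor) :
    f (prepend t x) = prepend t x :=
  hf.map_of_notMem _ (prepend_notMem_range_prepend hu x) (prepend_notMem_range_prepend hv x)
    (prepend_notMem_range_prepend hw x)

theorem isThreeCycle_genB_genB :
    IsThreeCycle (applyWord [genB, genB])
      (prepend [𝟎, 𝟏]) (prepend [𝟏, 𝟏]) (prepend [𝟏, 𝟎]) where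
  map_fst x := by simp [applyWord]
  map_snd x := by simp [applyWord]
  map_thd x := by simp [applyWord]
  map_of_notMem y h₀₁ h₁₁ h₁₀ := by
    obtain ⟨u, y, hu, rfl⟩ := exists_eq_prepend 2 y
    obtain ⟨b₀, b₁, rfl⟩ := List.length_eq_two.1 hu
    cases b₀ <;> cases b₁ <;> simp_all [applyWord]

/-- The factor `X` of the relation word, a conjugate of `b²`. -/
def leftCycleWord : List (Cantor → Cantor) :=
  [genC, genA, genB, genB, genC] ++ [genB, genB] ++ [genC, genB, genA, genC]

theorem isThreeCycle_leftCycleWord :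
    IsThreeCycle (applyWord leftCycleWord)
      (prepend [𝟎, 𝟎, 𝟎]) (prepend [𝟎, 𝟏, 𝟏]) (prepend [𝟎, 𝟏, 𝟎]) := by
  rw [leftCycleWord, applyWord_append, applyWord_append]
  apply isThreeCycle_genB_genB.conj <;> intro x <;> simp [applyWord]

/-- A conjugate of `c`, which swaps the prefixes `00` and `01`, and also `10` and `110`. -/
def swapWord : List (Cantor → Cantor) :=
  [genB, genA, genC, genB] ++ [genC] ++ [genB, genB, genC, genA, genB, genB]

theorem involutive_applyWord_swapWord : Function.Involutive (applyWord swapWord) := by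
  intro x
  simp [swapWord, applyWord]

theorem applyWord_swapWord_prepend_zero (b : Bool) (u : List Bool) (x : Cantor) :
    applyWord swapWord (prepend (𝟎 :: b :: u) x) = prepend (𝟎 :: (!b) :: u) x := by
  cases b <;> simp [swapWord, applyWord]

/-- The factor `Y` of the relation word, obtained from `b²` by two successive conjugations. -/
def rightCycleWord : List (Cantor → Cantor) :=
  swapWord ++ ([genC, genA, genB, genC] ++ [genB, genB] ++ [genC, genB, genB, genA, genC]) ++
    swapWord

theorem isThreeCycle_rightCycleWord :
    IsThreeCycle (applyWord rightCycleWord)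
      (prepend [𝟎, 𝟏, 𝟏]) (prepend [𝟎, 𝟎, 𝟏]) (prepend [𝟎, 𝟎, 𝟎]) := by
  have inner_cycle : IsThreeCycle
      (applyWord ([genC, genA, genB, genC] ++ [genB, genB] ++ [genC, genB, genB, genA, genC]))
      (prepend [𝟎, 𝟎, 𝟏]) (prepend [𝟎, 𝟏, 𝟏]) (prepend [𝟎, 𝟏, 𝟎]) := by
    rw [applyWord_append, applyWord_append]
    apply isThreeCycle_genB_genB.conj <;> intro x <;> simp [applyWord]
  rw [rightCycleWord, applyWord_append, applyWord_append]
  exact inner_cycle.conj involutive_applyWord_swapWord involutive_applyWord_swapWord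
    (applyWord_swapWord_prepend_zero _ _) (applyWord_swapWord_prepend_zero _ _)
    (applyWord_swapWord_prepend_zero _ _)

theorem applyWord_rightCycleWord_genA_applyWord_leftCycleWord (x : Cantor) :
    applyWord rightCycleWord (genA (applyWord leftCycleWord x)) = x := by
  have hX := isThreeCycle_leftCycleWord
  have hY := isThreeCycle_rightCycleWord
  have hX_one (u : List Bool) := hX.map_prepend_of_incompRel (t := 𝟏 :: u)
    (by simp [IncompRel]) (by simp [IncompRel]) (by simp [IncompRel])
  have hY_one (u : List Bool) := hY.map_prepend_of_incompRel (t := 𝟏 :: u)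
    (by simp [IncompRel]) (by simp [IncompRel]) (by simp [IncompRel])
  have hX_001 := hX.map_prepend_of_incompRel (t := [𝟎, 𝟎, 𝟏])
    (by decide) (by decide) (by decide)
  have hY_010 := hY.map_prepend_of_incompRel (t := [𝟎, 𝟏, 𝟎])
    (by decide) (by decide) (by decide)
  obtain ⟨u, y, hu, rfl⟩ := exists_eq_prepend 3 x
  obtain ⟨b₀, b₁, b₂, rfl⟩ := List.length_eq_three.1 hu
  cases b₀ with
  | true => simp only [hX_one, genA_prepend_one, hY_one]
  | false =>
    cases b₁ <;> cases b₂ <;>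
      simp only [hX.map_fst, hX.map_snd, hX.map_thd, hX_001, genA_prepend_zero, Bool.not_false,
        Bool.not_true, hY.map_fst, hY.map_snd, hY.map_thd, hY_010]

/-- The 45-letter relation cabbcbbcbacabacbcbbcabbcabcbbcbbacbacbcbbcabb acts as the identity. -/
theorem relation_cabbcbbcbacabacbcbbcabbcabcbbcbbacbacbcbbcabb : ∀ x : Cantor,
    applyWord [genC, genA, genB, genB, genC, genB, genB, genC, genB, genA,
               genC, genA, genB, genA, genC, genB, genC, genB, genB, genC,
               genA, genB, genB, genC, genA, genB, genC, genB, genB, genC,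
               genB, genB, genA, genC, genB, genA, genC, genB, genC, genB,
               genB, genC, genA, genB, genB] x = x := by
  intro x
  change applyWord (leftCycleWord ++ [genA] ++ rightCycleWord) x = x
  rw [applyWord_append, applyWord_append]
  exact applyWord_rightCycleWord_genA_applyWord_leftCycleWord x
end

section
/- The local rule for the generator a covers every cell of every configuration exactly once: for every x ∈ X and every position i ∈ ℤ, there exist a unique triple (u,v,w) ∈ R_a and a unique j ∈ ℤ such that the word uvw (concatenation) occurs in x starting at position j and j + |u| ≤ i < j + |u| + |v|. -/
/-- A finite word over the alphabet {0,1,2}. -/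
abbrev Word : Type := List (Fin 3)

/-- Membership in the vertex shift `X` defined by the matrix [[1,1,0],[1,1,1],[1,1,1]]:
the word 02 never occurs. -/
def inVertexShift (x : ℤ → Fin 3) : Prop :=
  ∀ n : ℤ, x n = 0 → x (n + 1) ≠ 2

/-- The word `u` occurs in `x` starting at position `j`. -/
def occursAt (u : Word) (x : ℤ → Fin 3) (j : ℤ) : Prop :=
  ∀ k : ℕ, k < u.length → x (j + (k : ℤ)) = u.getD k 0

/-- Embed a binary symbol of `Fin 2` into `Fin 3`. -/
def emb (α : Fin 2) : Fin 3 := α.castLE (by norm_num)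

/-- The local rule for the generator a: the set of triples u(v)w. -/
def Ra : Set (Word × Word × Word) :=
  {t | (∃ α β γ : Fin 2, t = ([emb α, emb β], [emb γ], [])) ∨
       t = ([], [2], [2]) ∨
       t = ([], [2, 0, 0], []) ∨
       (∃ α : Fin 2, t = ([], [2, 0, 1], [emb α])) ∨
       t = ([], [2, 0, 1], [2]) ∨
       t = ([], [2, 1], [2]) ∨
       (∃ α : Fin 2, t = ([], [2, 1, emb α], []))}

/-! A cell is covered by a rule starting with `2` exactly when one of the three cells ending at it
carries a `2`, and then the rule starts at the last such `2`: reading to the right from a `2`, the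
words `vw` of these rules form a complete prefix code (this uses that `02` is forbidden), and the
part `v` stops just before the next `2` or after three cells, whichever comes first. The remaining
cells are those that end three consecutive cells free of `2`; they are covered by the rules
`αβ(γ)`, and by no other. -/

/-- A triple `u(v)w` of words: the pattern `uvw` with the active part `v` marked. -/
abbrev Rule : Type := Word × Word × Word

/-- The word `uvw` that has to occur for the rule `u(v)w` to apply. -/
def Rule.pattern (t : Rule) : Word :=
  t.1 ++ t.2.1 ++ t.2.2

/-- The cells occupied by the part `v` when the rule `u(v)w` is read at position `j`. -/
def Rule.activeCells (t : Rule) (j : ℤ) : Set ℤ :=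
  Set.Ico (j + t.1.length) (j + t.1.length + t.2.1.length)

/-- The rule `t` applies to `x` at position `j`, and `i` is one of its active cells there. -/
def Covers (t : Rule) (x : ℤ → Fin 3) (j i : ℤ) : Prop :=
  occursAt t.pattern x j ∧ i ∈ t.activeCells j

/-- The rules `αβ(γ)` over the binary symbols. -/
def binaryRules : Set Rule :=
  {t | ∃ α β γ : Fin 2, t = ([emb α, emb β], [emb γ], [])}

/-- The rules of `Ra` with empty left context, whose active part begins with `2`. -/
def twoRules : Set Rule :=
  {t | t = ([], [2], [2]) ∨
       t = ([], [2, 0, 0], []) ∨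
       (∃ α : Fin 2, t = ([], [2, 0, 1], [emb α])) ∨
       t = ([], [2, 0, 1], [2]) ∨
       t = ([], [2, 1], [2]) ∨
       (∃ α : Fin 2, t = ([], [2, 1, emb α], []))}

/-- The position `j` carries the last `2` among the three cells `i - 2, i - 1, i`. -/
def IsLastTwo (x : ℤ → Fin 3) (j i : ℤ) : Prop :=
  x j = 2 ∧ j ≤ i ∧ i ≤ j + 2 ∧ ∀ k, j < k → k ≤ i → x k ≠ 2

/-- The member of `twoRules` read off from `x` at a position `j` carrying a `2`; at other
positions, or if `02` occurs in `x`, the rule need not apply. -/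
def twoRuleAt (x : ℤ → Fin 3) (j : ℤ) : Rule :=
  if x (j + 1) = 2 then ([], [2], [2])
  else if x (j + 1) = 0 then
    if x (j + 2) = 0 then ([], [2, 0, 0], []) else ([], [2, 0, 1], [x (j + 3)])
  else
    if x (j + 2) = 2 then ([], [2, 1], [2]) else ([], [2, 1, x (j + 2)], [])

theorem exists_eq_emb_iff {y : Fin 3} : (∃ α, y = emb α) ↔ y ≠ 2 := by
  revert y; decide

theorem emb_ne_two (α : Fin 2) : emb α ≠ 2 :=
  exists_eq_emb_iff.1 ⟨α, rfl⟩

theorem Ra_eq_union : Ra = binaryRules ∪ twoRules := rfl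

theorem inVertexShift.ne_two_of_eq_zero {x : ℤ → Fin 3} {j : ℤ} (hx : inVertexShift x)
    (h : x (j + 1) = 0) : x (j + 2) ≠ 2 := by
  simpa [add_assoc] using hx (j + 1) h

section Occurrence

variable {x : ℤ → Fin 3} {j : ℤ}

theorem occursAt_nil : occursAt [] x j := by
  simp [occursAt]

theorem occursAt_cons {a : Fin 3} {u : Word} :
    occursAt (a :: u) x j ↔ x j = a ∧ occursAt u x (j + 1) := by
  constructor
  · intro h
    refine ⟨by simpa using h 0 (by simp), fun k hk => ?_⟩
    simpa [add_assoc, add_comm (1 : ℤ)] using h (k + 1) (by simpa using hk)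
  · rintro ⟨h0, h⟩ (_ | k) hk
    · simpa using h0
    · simpa [add_assoc, add_comm (1 : ℤ)] using h k (by simpa using hk)

end Occurrence

section LastTwo

variable {x : ℤ → Fin 3} {i j k : ℤ}

theorem IsLastTwo.unique (hj : IsLastTwo x j i) (hk : IsLastTwo x k i) : j = k := by
  obtain ⟨hj2, hji, -, hj⟩ := hj
  obtain ⟨hk2, hki, -, hk⟩ := hk
  rcases lt_trichotomy j k with h | h | h
  · exact absurd hk2 (hj k h hki)
  · exact h
  · exact absurd hj2 (hk j h hji)

theorem isLastTwo_iff :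
    IsLastTwo x j i ↔ x j = 2 ∧
      (i = j ∨ i = j + 1 ∧ x (j + 1) ≠ 2 ∨ i = j + 2 ∧ x (j + 1) ≠ 2 ∧ x (j + 2) ≠ 2) := by
  refine and_congr_right fun _ => ⟨?_, ?_⟩
  · rintro ⟨h1, h2, h⟩
    obtain rfl | rfl | rfl : i = j ∨ i = j + 1 ∨ i = j + 2 := by omega
    · exact .inl rfl
    · exact .inr (.inl ⟨rfl, h _ (by omega) le_rfl⟩)
    · exact .inr (.inr ⟨rfl, h _ (by omega) (by omega), h _ (by omega) le_rfl⟩)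
  · rintro (rfl | ⟨rfl, h1⟩ | ⟨rfl, h1, h2⟩)
    · exact ⟨by omega, by omega, fun k _ _ => by omega⟩
    · refine ⟨by omega, by omega, fun k _ _ => ?_⟩
      obtain rfl : k = j + 1 := by omega
      exact h1
    · refine ⟨by omega, by omega, fun k _ _ => ?_⟩
      obtain rfl | rfl : k = j + 1 ∨ k = j + 2 := by omega
      exacts [h1, h2]

theorem exists_isLastTwo_iff :
    (∃ j, IsLastTwo x j i) ↔ x (i - 2) = 2 ∨ x (i - 1) = 2 ∨ x i = 2 := by
  constructor
  · rintro ⟨j, hj, h1, h2, -⟩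
    obtain rfl | rfl | rfl : j = i - 2 ∨ j = i - 1 ∨ j = i := by omega
    exacts [.inl hj, .inr (.inl hj), .inr (.inr hj)]
  · intro h
    by_cases h0 : x i = 2
    · exact ⟨i, isLastTwo_iff.2 (by simp [h0])⟩
    by_cases h1 : x (i - 1) = 2
    · exact ⟨i - 1, isLastTwo_iff.2 (by simp [h0, h1])⟩
    · have h2 : x (i - 2) = 2 := by tauto
      refine ⟨i - 2, isLastTwo_iff.2 ?_⟩
      simp [h0, h1, h2, show i - 2 + 1 = i - 1 by ring]

end LastTwo

section Covering

variable {x : ℤ → Fin 3} {t : Rule} {i j : ℤ}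

theorem mem_binaryRules_and_covers_iff :
    t ∈ binaryRules ∧ Covers t x j i ↔
      (¬∃ k, IsLastTwo x k i) ∧ j = i - 2 ∧ t = ([x (i - 2), x (i - 1)], [x i], []) := by
  simp only [exists_isLastTwo_iff, not_or]
  constructor
  · rintro ⟨⟨α, β, γ, rfl⟩, hocc, hle, hlt⟩
    simp only [List.length_cons, List.length_nil] at hle hlt
    obtain rfl : i = j + 2 := by omega
    simp only [Rule.pattern, List.cons_append, List.nil_append, List.append_nil, occursAt_cons,
      occursAt_nil, and_true, add_assoc, Int.reduceAdd] at hocc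
    obtain ⟨h0, h1, h2⟩ := hocc
    simp [h0, h1, h2, emb_ne_two, show j + 2 - 1 = j + 1 by ring]
  · rintro ⟨⟨h0, h1, h2⟩, rfl, rfl⟩
    obtain ⟨α, hα⟩ := exists_eq_emb_iff.2 h0
    obtain ⟨β, hβ⟩ := exists_eq_emb_iff.2 h1
    obtain ⟨γ, hγ⟩ := exists_eq_emb_iff.2 h2
    refine ⟨⟨α, β, γ, by rw [hα, hβ, hγ]⟩, ?_, by simp [Rule.activeCells]⟩
    simp [Rule.pattern, occursAt_cons, occursAt_nil, show i - 2 + 1 = i - 1 by ring]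

theorem eq_two_and_eq_twoRuleAt (ht : t ∈ twoRules) (hocc : occursAt t.pattern x j) :
    x j = 2 ∧ t = twoRuleAt x j := by
  rcases ht with rfl | rfl | ⟨α, rfl⟩ | rfl | rfl | ⟨α, rfl⟩ <;>
    simp only [Rule.pattern, List.cons_append, List.nil_append, List.append_nil, occursAt_cons,
      add_assoc, Int.reduceAdd] at hocc <;>
    simp [twoRuleAt, hocc, emb_ne_two]

theorem twoRuleAt_mem_twoRules : twoRuleAt x j ∈ twoRules := by
  unfold twoRuleAt
  split_ifs with hnext hnext' hthird hthird
  · simp [twoRules]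
  · simp [twoRules]
  · by_cases h3 : x (j + 3) = 2
    · simp [twoRules, h3]
    · obtain ⟨α, hα⟩ := exists_eq_emb_iff.2 h3
      exact .inr (.inr (.inl ⟨α, by rw [hα]⟩))
  · simp [twoRules]
  · obtain ⟨α, hα⟩ := exists_eq_emb_iff.2 hthird
    exact .inr (.inr (.inr (.inr (.inr ⟨α, by rw [hα]⟩))))

theorem occursAt_pattern_twoRuleAt (hx : inVertexShift x) (hj : x j = 2) :
    occursAt (twoRuleAt x j).pattern x j := by
  have eq_one {a : Fin 3} (h0 : a ≠ 0) (h2 : a ≠ 2) : a = 1 := by omega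
  unfold twoRuleAt
  split_ifs with hnext hnext' hthird hthird <;>
    simp only [Rule.pattern, List.cons_append, List.nil_append, List.append_nil, occursAt_cons,
      occursAt_nil, and_true, add_assoc, Int.reduceAdd]
  · exact ⟨hj, hnext⟩
  · exact ⟨hj, hnext', hthird⟩
  · exact ⟨hj, hnext', eq_one hthird (hx.ne_two_of_eq_zero hnext')⟩
  · exact ⟨hj, eq_one hnext' hnext, hthird⟩
  · exact ⟨hj, eq_one hnext' hnext⟩

theorem mem_activeCells_twoRuleAt_iff (hx : inVertexShift x) (hj : x j = 2) :
    i ∈ (twoRuleAt x j).activeCells j ↔ IsLastTwo x j i := by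
  have h02 : x (j + 1) = 0 → x (j + 2) ≠ 2 := hx.ne_two_of_eq_zero
  rw [isLastTwo_iff]
  unfold twoRuleAt
  split_ifs with hnext hnext' hthird hthird <;>
    simp only [Rule.activeCells, Set.mem_Ico, List.length_nil, List.length_cons, hj, true_and] <;>
    omega

theorem mem_twoRules_and_covers_iff (hx : inVertexShift x) :
    t ∈ twoRules ∧ Covers t x j i ↔ IsLastTwo x j i ∧ t = twoRuleAt x j := by
  constructor
  · rintro ⟨ht, hocc, hi⟩
    obtain ⟨hj, rfl⟩ := eq_two_and_eq_twoRuleAt ht hocc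
    exact ⟨(mem_activeCells_twoRuleAt_iff hx hj).1 hi, rfl⟩
  · rintro ⟨h, rfl⟩
    exact ⟨twoRuleAt_mem_twoRules, occursAt_pattern_twoRuleAt hx h.1,
      (mem_activeCells_twoRuleAt_iff hx h.1).2 h⟩

end Covering

/-- The local rule for a covers every cell of every configuration exactly once. -/
theorem Ra_partitions : ∀ x : ℤ → Fin 3, inVertexShift x → ∀ i : ℤ,
    ∃! p : (Word × Word × Word) × ℤ,
      p.1 ∈ Ra ∧ occursAt (p.1.1 ++ p.1.2.1 ++ p.1.2.2) x p.2 ∧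
      p.2 + (p.1.1.length : ℤ) ≤ i ∧ i < p.2 + (p.1.1.length : ℤ) + (p.1.2.1.length : ℤ) := by
  intro x hx i
  change ∃! p : Rule × ℤ, p.1 ∈ Ra ∧ Covers p.1 x p.2 i
  simp only [Ra_eq_union, Set.mem_union, or_and_right, mem_binaryRules_and_covers_iff,
    mem_twoRules_and_covers_iff hx]
  by_cases h : ∃ j, IsLastTwo x j i
  · obtain ⟨j, hj⟩ := h
    refine ⟨(twoRuleAt x j, j), .inr ⟨hj, rfl⟩, ?_⟩
    rintro ⟨t, k⟩ (⟨hno, -⟩ | ⟨hk, ht⟩)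
    · exact absurd ⟨j, hj⟩ hno
    · obtain rfl : k = j := hk.unique hj
      exact Prod.ext ht rfl
  · refine ⟨(([x (i - 2), x (i - 1)], [x i], []), i - 2), .inl ⟨h, rfl, rfl⟩, ?_⟩
    rintro ⟨t, k⟩ (⟨-, rfl, rfl⟩ | ⟨hk, -⟩)
    · rfl
    · exact absurd ⟨k, hk⟩ h
end
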